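/- Fix a ∈ ℝ and let (Φ, W, Ψ, θ) be a solution of system (D) defined for all τ ∈ ℝ with Φ(τ) > 0 and θ(τ) ∈ (−π/2, π/2) for all τ. Suppose liminf_{τ→−∞} Φ(τ) < ∞ and limsup_{τ→−∞} ( Φ(τ) + |W(τ)| + |Ψ(τ)| ) = ∞. Then at least one of the following holds: liminf_{τ→−∞} Φ(τ) = 0, or limsup_{τ→−∞} Φ(τ) = ∞. -/

import Mathlib

/-!
If `Φ` stays between two positive constants near `-∞`, the right-hand side of the `Ψ` equation is
bounded by `K (1 + |W| + |Ψ|)`. On an interval of length `h` where `|Φ| ≤ C`, the mean value theorem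
gives a point where `|W| ≤ 2 C / h` and a point where `|Ψ| ≤ 36 C / h ^ 2`. The maximum `N` of
`|W| + |Ψ|` over the interval exceeds the sum of these two bounds by at most `(K (1 + N) + N) h`,
which is absorbed into `N` once `(K + 1) h ≤ 1 / 2`. As `h` depends only on `K`, the resulting bound
on `|W| + |Ψ|` is uniform near `-∞`, so a blow-up of `Φ + |W| + |Ψ|` forces `Φ` to come
arbitrarily close to `0` or to be unbounded.
-/

open Filter Set

/-- The right-hand side of the `Ψ` equation in system (D). -/
noncomputable def dPsi (a Φ W Ψ θ : ℝ) : ℝ :=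
  1 / Φ ^ 3 - 1 - (a - 1) * Real.cos θ ^ 2 -
    (((16 / 3) * Real.sin θ - (224 / 27) * Real.sin θ ^ 3) * Real.cos θ ^ ((17 : ℝ) / 3) * Φ
      + ((208 / 81) * Real.sin θ ^ 2 - 10 / 9) * Real.cos θ ^ ((34 : ℝ) / 9) * W
      + (2 / 3) * Real.sin θ * Real.cos θ ^ ((17 : ℝ) / 9) * Ψ)

/-- `(Φ, W, Ψ, θ)` is a solution of system (D) on all of `ℝ`. -/
noncomputable def SolD (a : ℝ) (Φ W Ψ θ : ℝ → ℝ) : Prop :=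
  ∀ τ : ℝ,
    HasDerivAt Φ (W τ) τ ∧
    HasDerivAt W (Ψ τ) τ ∧
    HasDerivAt Ψ (dPsi a (Φ τ) (W τ) (Ψ τ) (θ τ)) τ ∧
    HasDerivAt θ (Real.cos (θ τ) ^ ((26 : ℝ) / 9)) τ

section Interpolation

variable {f f' f'' : ℝ → ℝ} {s t C : ℝ}

theorem exists_abs_deriv_le (hst : s < t)
    (hf : ∀ x ∈ Icc s t, HasDerivWithinAt f (f' x) (Icc s t) x)
    (hs : |f s| ≤ C) (ht : |f t| ≤ C) : ∃ ξ ∈ Ioo s t, |f' ξ| ≤ 2 * C / (t - s) := by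
  obtain ⟨ξ, hξ, hslope⟩ := exists_hasDerivAt_eq_slope f f' hst
    (fun x hx => (hf x hx).continuousWithinAt)
    (fun x hx => (hf x (Ioo_subset_Icc_self hx)).hasDerivAt (Icc_mem_nhds hx.1 hx.2))
  refine ⟨ξ, hξ, ?_⟩
  rw [hslope, abs_div, abs_of_pos (sub_pos.2 hst)]
  gcongr
  calc |f t - f s| ≤ |f t| + |f s| := abs_sub _ _
    _ ≤ 2 * C := by linarith

theorem exists_abs_second_deriv_le (hst : s < t)
    (hf : ∀ x ∈ Icc s t, HasDerivWithinAt f (f' x) (Icc s t) x)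
    (hf' : ∀ x ∈ Icc s t, HasDerivWithinAt f' (f'' x) (Icc s t) x)
    (hC : ∀ x ∈ Icc s t, |f x| ≤ C) : ∃ η ∈ Icc s t, |f'' η| ≤ 36 * C / (t - s) ^ 2 := by
  set p := s + (t - s) / 3 with hp
  set q := t - (t - s) / 3
  have hC₀ : 0 ≤ C := (abs_nonneg _).trans (hC s (left_mem_Icc.2 hst.le))
  have hleft : Icc s p ⊆ Icc s t := Icc_subset_Icc_right (by linarith)
  have hright : Icc q t ⊆ Icc s t := Icc_subset_Icc_left (by linarith)
  obtain ⟨ξ₁, hξ₁, hb₁⟩ := exists_abs_deriv_le (by linarith : s < p)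
    (fun x hx => (hf x (hleft hx)).mono hleft)
    (hC s ⟨by linarith, by linarith⟩) (hC p ⟨by linarith, by linarith⟩)
  obtain ⟨ξ₂, hξ₂, hb₂⟩ := exists_abs_deriv_le (by linarith : q < t)
    (fun x hx => (hf x (hright hx)).mono hright)
    (hC q ⟨by linarith, by linarith⟩) (hC t ⟨by linarith, by linarith⟩)
  rw [show p - s = (t - s) / 3 by linarith] at hb₁
  rw [show t - q = (t - s) / 3 by linarith] at hb₂
  have hgap : (t - s) / 3 ≤ ξ₂ - ξ₁ := by linarith [hξ₁.2, hξ₂.1]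
  have hmiddle : Icc ξ₁ ξ₂ ⊆ Icc s t := Icc_subset_Icc hξ₁.1.le hξ₂.2.le
  obtain ⟨η, hη, hb⟩ := exists_abs_deriv_le (by linarith : ξ₁ < ξ₂)
    (fun x hx => (hf' x (hmiddle hx)).mono hmiddle) hb₁ hb₂
  have hh : 0 < t - s := sub_pos.2 hst
  refine ⟨η, hmiddle (Ioo_subset_Icc_self hη), ?_⟩
  calc |f'' η| ≤ 2 * (2 * C / ((t - s) / 3)) / (ξ₂ - ξ₁) := hb
    _ ≤ 2 * (2 * C / ((t - s) / 3)) / ((t - s) / 3) := by gcongr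
    _ = 36 * C / (t - s) ^ 2 := by field_simp; ring

end Interpolation

section Propagation

variable {E : Type*} [NormedAddCommGroup E] [NormedSpace ℝ E] {s t : ℝ}

theorem norm_le_norm_add_mul_of_norm_deriv_le {f f' : ℝ → E} {M x y : ℝ}
    (hf : ∀ z ∈ Icc s t, HasDerivWithinAt f (f' z) (Icc s t) z)
    (hM : ∀ z ∈ Icc s t, ‖f' z‖ ≤ M) (hx : x ∈ Icc s t) (hy : y ∈ Icc s t) :
    ‖f y‖ ≤ ‖f x‖ + M * (t - s) := by
  have hM₀ : 0 ≤ M := (norm_nonneg _).trans (hM x hx)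
  calc ‖f y‖ ≤ ‖f x‖ + ‖f y - f x‖ := norm_le_norm_add_norm_sub' _ _
    _ ≤ ‖f x‖ + M * ‖y - x‖ := by
      gcongr
      exact (convex_Icc s t).norm_image_sub_le_of_norm_hasDerivWithin_le hf hM hx hy
    _ ≤ ‖f x‖ + M * (t - s) := by
      gcongr
      exact abs_sub_le_of_le_of_le hy.1 hy.2 hx.1 hx.2

theorem norm_add_norm_deriv_le_of_linear_growth {g g' g'' : ℝ → E} {K ξ η : ℝ}
    (hg : ∀ x ∈ Icc s t, HasDerivWithinAt g (g' x) (Icc s t) x)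
    (hg' : ∀ x ∈ Icc s t, HasDerivWithinAt g' (g'' x) (Icc s t) x)
    (hK : ∀ x ∈ Icc s t, ‖g'' x‖ ≤ K * (1 + ‖g x‖ + ‖g' x‖))
    (hshort : (K + 1) * (t - s) ≤ 1 / 2) (hξ : ξ ∈ Icc s t) (hη : η ∈ Icc s t) :
    ∀ x ∈ Icc s t, ‖g x‖ + ‖g' x‖ ≤ 2 * (‖g ξ‖ + ‖g' η‖) + 1 := by
  have hgc : ContinuousOn g (Icc s t) := fun x hx => (hg x hx).continuousWithinAt
  have hgc' : ContinuousOn g' (Icc s t) := fun x hx => (hg' x hx).continuousWithinAt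
  obtain ⟨m, hm, hmax⟩ := isCompact_Icc.exists_isMaxOn ⟨ξ, hξ⟩ (hgc.norm.add hgc'.norm)
  set N := ‖g m‖ + ‖g' m‖
  have hle : ∀ x ∈ Icc s t, ‖g x‖ + ‖g' x‖ ≤ N := fun x hx => hmax hx
  have hK₀ : 0 ≤ K :=
    nonneg_of_mul_nonneg_left ((norm_nonneg _).trans (hK ξ hξ)) (by positivity)
  have hgm : ‖g m‖ ≤ ‖g ξ‖ + N * (t - s) :=
    norm_le_norm_add_mul_of_norm_deriv_le hg
      (fun x hx => by linarith [hle x hx, norm_nonneg (g x)]) hξ hm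
  have hgm' : ‖g' m‖ ≤ ‖g' η‖ + K * (1 + N) * (t - s) := by
    refine norm_le_norm_add_mul_of_norm_deriv_le hg' (fun x hx => (hK x hx).trans ?_) hη hm
    exact mul_le_mul_of_nonneg_left (by linarith [hle x hx]) hK₀
  have habsorb : (K + 1) * (t - s) * (1 + N) ≤ 1 / 2 * (1 + N) := by gcongr
  have hst : 0 ≤ t - s := sub_nonneg.2 (hξ.1.trans hξ.2)
  intro x hx
  linarith [hle x hx]

end Propagation

section ThirdOrder

variable {Φ W Ψ D : ℝ → ℝ}

theorem abs_deriv_add_abs_second_deriv_le_of_linear_growth {s t C K : ℝ} (hst : s < t)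
    (hΦ : ∀ x ∈ Icc s t, HasDerivWithinAt Φ (W x) (Icc s t) x)
    (hW : ∀ x ∈ Icc s t, HasDerivWithinAt W (Ψ x) (Icc s t) x)
    (hΨ : ∀ x ∈ Icc s t, HasDerivWithinAt Ψ (D x) (Icc s t) x)
    (hC : ∀ x ∈ Icc s t, |Φ x| ≤ C)
    (hK : ∀ x ∈ Icc s t, |D x| ≤ K * (1 + |W x| + |Ψ x|))
    (hshort : (K + 1) * (t - s) ≤ 1 / 2) :
    ∀ x ∈ Icc s t,
      |W x| + |Ψ x| ≤ 2 * (2 * C / (t - s) + 36 * C / (t - s) ^ 2) + 1 := by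
  obtain ⟨ξ, hξ, hWξ⟩ := exists_abs_deriv_le hst hΦ
    (hC s (left_mem_Icc.2 hst.le)) (hC t (right_mem_Icc.2 hst.le))
  obtain ⟨η, hη, hΨη⟩ := exists_abs_second_deriv_le hst hΦ hW hC
  intro x hx
  calc |W x| + |Ψ x| ≤ 2 * (|W ξ| + |Ψ η|) + 1 :=
        norm_add_norm_deriv_le_of_linear_growth hW hΨ hK hshort
          (Ioo_subset_Icc_self hξ) hη x hx
    _ ≤ 2 * (2 * C / (t - s) + 36 * C / (t - s) ^ 2) + 1 := by gcongr

theorem isBoundedUnder_abs_deriv_add_abs_second_deriv_of_linear_growth {C K : ℝ}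
    (hΦ : ∀ᶠ τ in atBot, HasDerivAt Φ (W τ) τ) (hW : ∀ᶠ τ in atBot, HasDerivAt W (Ψ τ) τ)
    (hΨ : ∀ᶠ τ in atBot, HasDerivAt Ψ (D τ) τ) (hC : ∀ᶠ τ in atBot, |Φ τ| ≤ C)
    (hK : ∀ᶠ τ in atBot, |D τ| ≤ K * (1 + |W τ| + |Ψ τ|)) :
    IsBoundedUnder (· ≤ ·) atBot fun τ => |W τ| + |Ψ τ| := by
  obtain ⟨T, hT⟩ := eventually_atBot.1 (hΦ.and (hW.and (hΨ.and (hC.and hK))))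
  simp only [forall_and] at hT
  obtain ⟨hΦT, hWT, hΨT, hCT, hKT⟩ := hT
  have hK₀ : 0 ≤ K :=
    nonneg_of_mul_nonneg_left ((abs_nonneg _).trans (hKT T le_rfl)) (by positivity)
  set h := 1 / (2 * (K + 1)) with hh
  have hpos : 0 < h := by positivity
  have hshort : (K + 1) * h = 1 / 2 := by
    rw [hh]
    field_simp
  refine isBoundedUnder_of_eventually_le (a := 2 * (2 * C / h + 36 * C / h ^ 2) + 1) ?_
  filter_upwards [eventually_le_atBot T] with τ hτ
  have hle : ∀ x ∈ Icc (τ - h) τ, x ≤ T := fun x hx => hx.2.trans hτ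
  have hbound := abs_deriv_add_abs_second_deriv_le_of_linear_growth (sub_lt_self τ hpos)
    (fun x hx => (hΦT x (hle x hx)).hasDerivWithinAt)
    (fun x hx => (hWT x (hle x hx)).hasDerivWithinAt)
    (fun x hx => (hΨT x (hle x hx)).hasDerivWithinAt)
    (fun x hx => hCT x (hle x hx)) (fun x hx => hKT x (hle x hx))
    (by rw [sub_sub_cancel]; exact hshort.le)
    τ (right_mem_Icc.2 (sub_le_self τ hpos.le))
  rwa [sub_sub_cancel] at hbound

end ThirdOrder

section ExtendedLimits

variable {ι : Type*} {l : Filter ι} {u : ι → ℝ}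

theorem limsup_coe_ereal_ne_top_iff :
    limsup (fun i => (u i : EReal)) l ≠ ⊤ ↔ IsBoundedUnder (· ≤ ·) l u := by
  constructor
  · intro h
    obtain ⟨C, hC, -⟩ := EReal.lt_iff_exists_real_btwn.1 h.lt_top
    refine isBoundedUnder_of_eventually_le (a := C) ?_
    filter_upwards [eventually_lt_of_limsup_lt hC] with i hi
    exact (EReal.coe_lt_coe_iff.1 hi).le
  · rintro ⟨C, hC⟩
    have hle : limsup (fun i => (u i : EReal)) l ≤ C :=
      limsup_le_of_le (h := (eventually_map.1 hC).mono fun _ => EReal.coe_le_coe)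
    exact (hle.trans_lt (EReal.coe_lt_top C)).ne

theorem exists_pos_eventually_le_of_liminf_coe_ereal_ne_zero (hu : ∀ᶠ i in l, 0 ≤ u i)
    (h : liminf (fun i => (u i : EReal)) l ≠ 0) : ∃ c > 0, ∀ᶠ i in l, c ≤ u i := by
  have hnonneg : 0 ≤ liminf (fun i => (u i : EReal)) l :=
    le_liminf_of_le (h := hu.mono fun _ => EReal.coe_nonneg.2)
  obtain ⟨c, hc, hlt⟩ := EReal.lt_iff_exists_real_btwn.1 (hnonneg.lt_of_ne' h)
  refine ⟨c, EReal.coe_pos.1 hc, ?_⟩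
  filter_upwards [eventually_lt_of_lt_liminf hlt] with i hi
  exact (EReal.coe_lt_coe_iff.1 hi).le

end ExtendedLimits

section Coefficients

variable {θ : ℝ}

theorem abs_mul_cos_rpow_mul_le {A k p : ℝ} (hθ : 0 ≤ Real.cos θ) (hp : 0 ≤ p) (hA : |A| ≤ k)
    (x : ℝ) : |A * Real.cos θ ^ p * x| ≤ k * |x| := by
  have hcos : Real.cos θ ^ p ≤ 1 := Real.rpow_le_one hθ (Real.cos_le_one θ) hp
  have hcos₀ : 0 ≤ Real.cos θ ^ p := Real.rpow_nonneg hθ p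
  rw [abs_mul, abs_mul, abs_of_nonneg hcos₀]
  gcongr
  exact (mul_le_of_le_one_right (abs_nonneg A) hcos).trans hA

theorem abs_dPsi_le (a Φ W Ψ : ℝ) (hθ : 0 ≤ Real.cos θ) :
    |dPsi a Φ W Ψ θ| ≤ |1 / Φ ^ 3| + 1 + |a - 1| + (14 * |Φ| + 2 * |W| + |Ψ|) := by
  have hsin := abs_le.1 (Real.abs_sin_le_one θ)
  have hsin_sq : Real.sin θ ^ 2 ≤ 1 := Real.sin_sq_le_one θ
  have hsin_cube : |Real.sin θ ^ 3| ≤ 1 := by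
    simpa only [abs_pow] using pow_le_one₀ (abs_nonneg _) (Real.abs_sin_le_one θ)
  have hcos : |(a - 1) * Real.cos θ ^ 2| ≤ |a - 1| := by
    rw [abs_mul, abs_of_nonneg (sq_nonneg (Real.cos θ))]
    exact mul_le_of_le_one_right (abs_nonneg _) (Real.cos_sq_le_one θ)
  have hΦcoeff : |16 / 3 * Real.sin θ - 224 / 27 * Real.sin θ ^ 3| ≤ 14 := by
    rw [abs_le] at hsin_cube ⊢
    constructor <;> linarith
  have hWcoeff : |208 / 81 * Real.sin θ ^ 2 - 10 / 9| ≤ 2 := by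
    rw [abs_le]
    constructor <;> linarith [sq_nonneg (Real.sin θ)]
  have hΨcoeff : |2 / 3 * Real.sin θ| ≤ 1 := by
    rw [abs_le]
    constructor <;> linarith
  unfold dPsi
  refine (abs_sub _ _).trans (add_le_add ?_ ?_)
  · calc |1 / Φ ^ 3 - 1 - (a - 1) * Real.cos θ ^ 2|
        ≤ |1 / Φ ^ 3 - 1| + |(a - 1) * Real.cos θ ^ 2| := abs_sub _ _
      _ ≤ |1 / Φ ^ 3| + 1 + |a - 1| :=
        add_le_add ((abs_sub _ _).trans_eq (by rw [abs_one])) hcos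
  · exact (abs_add_three _ _ _).trans (add_le_add_three
      (abs_mul_cos_rpow_mul_le hθ (by norm_num) hΦcoeff Φ)
      (abs_mul_cos_rpow_mul_le hθ (by norm_num) hWcoeff W)
      ((abs_mul_cos_rpow_mul_le hθ (by norm_num) hΨcoeff Ψ).trans_eq (one_mul _)))

theorem exists_abs_dPsi_le (a : ℝ) {c : ℝ} (hc : 0 < c) (C : ℝ) :
    ∃ K, ∀ Φ W Ψ θ : ℝ, c ≤ Φ → Φ ≤ C → 0 ≤ Real.cos θ →
      |dPsi a Φ W Ψ θ| ≤ K * (1 + |W| + |Ψ|) := by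
  refine ⟨1 / c ^ 3 + 1 + |a - 1| + 14 * |C| + 2, fun Φ W Ψ θ hcΦ hΦC hθ => ?_⟩
  have hΦ : 0 < Φ := hc.trans_le hcΦ
  set k := 1 / c ^ 3 + 1 + |a - 1| + 14 * |C| with hk
  have hk₀ : 0 ≤ k := by positivity
  calc |dPsi a Φ W Ψ θ| ≤ |1 / Φ ^ 3| + 1 + |a - 1| + (14 * |Φ| + 2 * |W| + |Ψ|) :=
        abs_dPsi_le a Φ W Ψ hθ
    _ ≤ 1 / c ^ 3 + 1 + |a - 1| + (14 * |C| + 2 * |W| + |Ψ|) := by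
      rw [abs_of_pos (by positivity : 0 < 1 / Φ ^ 3)]
      gcongr
    _ = k + (2 * |W| + |Ψ|) := by rw [hk]; ring
    _ ≤ (k + 2) * (1 + |W| + |Ψ|) := by
      linarith [abs_nonneg Ψ, mul_nonneg hk₀ (add_nonneg (abs_nonneg W) (abs_nonneg Ψ))]

end Coefficients

theorem liminf_zero_or_limsup_top_general {Φ W Ψ D : ℝ → ℝ}
    (hΦ : ∀ᶠ τ in atBot, HasDerivAt Φ (W τ) τ) (hW : ∀ᶠ τ in atBot, HasDerivAt W (Ψ τ) τ)
    (hΨ : ∀ᶠ τ in atBot, HasDerivAt Ψ (D τ) τ) (hΦ₀ : ∀ᶠ τ in atBot, 0 ≤ Φ τ)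
    (hD : ∀ c > 0, ∀ C, ∃ K, ∀ᶠ τ in atBot,
      c ≤ Φ τ → Φ τ ≤ C → |D τ| ≤ K * (1 + |W τ| + |Ψ τ|))
    (hlimsup : limsup (fun τ => ((Φ τ + |W τ| + |Ψ τ| : ℝ) : EReal)) atBot = ⊤) :
    liminf (fun τ => (Φ τ : EReal)) atBot = 0 ∨ limsup (fun τ => (Φ τ : EReal)) atBot = ⊤ := by
  by_contra! ⟨hliminf_ne, hlimsup_ne⟩
  obtain ⟨c, hc, hcΦ⟩ := exists_pos_eventually_le_of_liminf_coe_ereal_ne_zero hΦ₀ hliminf_ne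
  have hΦbdd := limsup_coe_ereal_ne_top_iff.1 hlimsup_ne
  obtain ⟨C, hC⟩ := hΦbdd.eventually_le
  obtain ⟨K, hK⟩ := hD c hc C
  have hWΨbdd : IsBoundedUnder (· ≤ ·) atBot fun τ => |W τ| + |Ψ τ| := by
    refine isBoundedUnder_abs_deriv_add_abs_second_deriv_of_linear_growth (C := C) (K := K)
      hΦ hW hΨ ?_ ?_
    · filter_upwards [hΦ₀, hC] with τ h₀ hle using (abs_of_nonneg h₀).trans_le hle
    · filter_upwards [hK, hcΦ, hC] with τ h hlow hupp using h hlow hupp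
  refine limsup_coe_ereal_ne_top_iff.2 ?_ hlimsup
  simpa only [add_assoc, Pi.add_def] using isBoundedUnder_le_add hΦbdd hWΨbdd

/-- either `liminf_{τ→-∞} Φ = 0` or `limsup_{τ→-∞} Φ = ∞`. -/
theorem liminf_zero_or_limsup_top (a : ℝ) (Φ W Ψ θ : ℝ → ℝ)
    (hsol : SolD a Φ W Ψ θ)
    (hΦpos : ∀ τ : ℝ, 0 < Φ τ)
    (hθ : ∀ τ : ℝ, θ τ ∈ Set.Ioo (-(Real.pi / 2)) (Real.pi / 2))
    (hliminf : Filter.liminf (fun τ : ℝ => ((Φ τ : ℝ) : EReal)) atBot < ⊤)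
    (hlimsup : Filter.limsup (fun τ : ℝ => ((Φ τ + |W τ| + |Ψ τ| : ℝ) : EReal)) atBot = ⊤) :
    Filter.liminf (fun τ : ℝ => ((Φ τ : ℝ) : EReal)) atBot = 0 ∨
    Filter.limsup (fun τ : ℝ => ((Φ τ : ℝ) : EReal)) atBot = ⊤ := by
  refine liminf_zero_or_limsup_top_general (.of_forall fun τ => (hsol τ).1)
    (.of_forall fun τ => (hsol τ).2.1) (.of_forall fun τ => (hsol τ).2.2.1)
    (.of_forall fun τ => (hΦpos τ).le) (fun c hc C => ?_) hlimsup
  exact (exists_abs_dPsi_le a hc C).imp fun K hK => .of_forall fun τ hcΦ hΦC =>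
    hK _ _ _ _ hcΦ hΦC (Real.cos_pos_of_mem_Ioo (hθ τ)).le
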